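/- Let u, ε, q ∈ ℝ and let X : ℝ³ → ℝ³ be the vector field X(θ1,θ2,θ3) = (u sinθ1 cosθ2 + ε sin2θ1 cos2θ2, u sinθ2 cosθ3 + ε sin2θ2 cos2θ3, u sinθ3 cosθ1 + ε sin2θ3 cos2θ1 + q(1 − cos(θ1−θ2)) sin2θ3). Then the points (0,0,0), (π,0,0), (0,π,0) and (0,0,π) are equilibria of X (X vanishes there), and the Jacobian matrix of X at these points is diagonal with the following diagonal entries (eigenvalues): at (0,0,0): (u+2ε, u+2ε, u+2ε); at (π,0,0): (−u+2ε, u+2ε, −u+2ε+4q); at (0,π,0): (−u+2ε, −u+2ε, u+2ε+4q); at (0,0,π): (u+2ε, −u+2ε, −u+2ε). -/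

import Mathlib

open Real

open scoped Topology

/-!
Since `sin 2x = 2 sin x cos x`, the field factors componentwise as `Xᵢ(θ) = Gᵢ(θ) sin θᵢ` with `G`
continuous. A product with a factor vanishing at `p` only differentiates that factor at `p`, so at
every `p ∈ (πℤ)³` the field vanishes and its Jacobian is diagonal with entries `Gᵢ(p) cos pᵢ`.
-/

section SMul

variable {𝕜 E R F : Type*} [NontriviallyNormedField 𝕜]
  [NormedAddCommGroup E] [NormedSpace 𝕜 E] [NormedAddCommGroup F] [NormedSpace 𝕜 F]
  [NormedRing R] [Module R F] [IsBoundedSMul R F] [SMulCommClass 𝕜 R F]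

theorem hasFDerivAt_smul_of_eq_zero {g : E → R} {f : E → F} {f' : E →L[𝕜] F} {p : E}
    (hg : ContinuousAt g p) (hf : HasFDerivAt f f' p) (hfp : f p = 0) :
    HasFDerivAt (fun x => g x • f x) (g p • f') p := by
  have hg_sub : (fun x => g x - g p) =o[𝓝 p] fun _ => (1 : 𝕜) :=
    (Asymptotics.isLittleO_one_iff 𝕜).2 (tendsto_sub_nhds_zero_iff.2 hg)
  have hf_bigO : f =O[𝓝 p] fun x => x - p := by
    simpa only [hfp, sub_zero] using hf.isBigO_sub
  have variation_g : (fun x => (g x - g p) • f x) =o[𝓝 p] fun x => x - p := by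
    simpa only [one_smul] using hg_sub.smul_isBigO hf_bigO
  have remainder_f : (fun x => g p • (f x - f p - f' (x - p))) =o[𝓝 p] fun x => x - p :=
    hf.isLittleO.const_smul_left (g p)
  refine .of_isLittleO ((variation_g.add remainder_f).congr_left fun x => ?_)
  simp only [hfp, smul_apply, sub_smul, smul_sub, smul_zero]
  abel

end SMul

/-- The componentwise sine on `ℝ³`, whose zero set is the lattice `(πℤ)³`. -/
noncomputable def sinVec (θ : ℝ × ℝ × ℝ) : ℝ × ℝ × ℝ :=
  (sin θ.1, sin θ.2.1, sin θ.2.2)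

/-- The componentwise cosine on `ℝ³`. Under the product-ring structure of `ℝ × ℝ × ℝ`,
multiplication by a vector is the diagonal matrix with that diagonal, so `cosVec θ` encodes the
Jacobian of `sinVec` at `θ`. -/
noncomputable def cosVec (θ : ℝ × ℝ × ℝ) : ℝ × ℝ × ℝ :=
  (cos θ.1, cos θ.2.1, cos θ.2.2)

/-- The cofactor `G` in the componentwise factorization `X = G * sinVec` of the vector field. -/
noncomputable def sinCofactor (u ε q : ℝ) (θ : ℝ × ℝ × ℝ) : ℝ × ℝ × ℝ :=
  (u * cos θ.2.1 + 2 * ε * cos θ.1 * cos (2 * θ.2.1),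
   u * cos θ.2.2 + 2 * ε * cos θ.2.1 * cos (2 * θ.2.2),
   u * cos θ.1 + 2 * ε * cos θ.2.2 * cos (2 * θ.1) +
     2 * q * (1 - cos (θ.1 - θ.2.1)) * cos θ.2.2)

theorem hasFDerivAt_sinVec (p : ℝ × ℝ × ℝ) :
    HasFDerivAt sinVec (ContinuousLinearMap.mul ℝ (ℝ × ℝ × ℝ) (cosVec p)) p := by
  have hsin (x : ℝ) := (hasDerivAt_sin x).hasFDerivAt
  refine ((hsin p.1).prodMap p ((hsin p.2.1).prodMap p.2 (hsin p.2.2))).congr_fderiv ?_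
  ext <;> simp [cosVec]

theorem continuous_sinCofactor (u ε q : ℝ) : Continuous (sinCofactor u ε q) := by
  unfold sinCofactor
  fun_prop

theorem sinCofactor_smul_sinVec (u ε q : ℝ) (θ : ℝ × ℝ × ℝ) :
    sinCofactor u ε q θ • sinVec θ =
      (u * sin θ.1 * cos θ.2.1 + ε * sin (2 * θ.1) * cos (2 * θ.2.1),
       u * sin θ.2.1 * cos θ.2.2 + ε * sin (2 * θ.2.1) * cos (2 * θ.2.2),
       u * sin θ.2.2 * cos θ.1 + ε * sin (2 * θ.2.2) * cos (2 * θ.1) +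
         q * (1 - cos (θ.1 - θ.2.1)) * sin (2 * θ.2.2)) := by
  ext <;> simp only [sinCofactor, sinVec, smul_eq_mul, Prod.mk_mul_mk, sin_two_mul] <;> ring

theorem sinCofactor_mul_cosVec_of_sinVec_eq_zero (u ε q : ℝ) {p : ℝ × ℝ × ℝ}
    (hp : sinVec p = 0) :
    sinCofactor u ε q p * cosVec p =
      (u * cos p.1 * cos p.2.1 + 2 * ε,
       u * cos p.2.1 * cos p.2.2 + 2 * ε,
       u * cos p.2.2 * cos p.1 + 2 * ε + 2 * (1 - cos p.1 * cos p.2.1) * q) := by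
  obtain ⟨h₁, h₂, h₃⟩ : sin p.1 = 0 ∧ sin p.2.1 = 0 ∧ sin p.2.2 = 0 := by
    simpa only [sinVec, Prod.mk_eq_zero] using hp
  have cos_sq_eq_one {x : ℝ} (hx : sin x = 0) : cos x ^ 2 = 1 := by simp [cos_sq', hx]
  have cos_two_mul_eq_one {x : ℝ} (hx : sin x = 0) : cos (2 * x) = 1 := by
    rw [cos_two_mul, cos_sq_eq_one hx]
    norm_num
  simp only [sinCofactor, cosVec, Prod.mk_mul_mk, cos_sub, h₁, cos_two_mul_eq_one h₁,
    cos_two_mul_eq_one h₂, cos_two_mul_eq_one h₃, zero_mul, add_zero, mul_one]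
  refine Prod.ext ?_ (Prod.ext ?_ ?_)
  · linear_combination 2 * ε * cos_sq_eq_one h₁
  · linear_combination 2 * ε * cos_sq_eq_one h₂
  · linear_combination (2 * ε + 2 * (1 - cos p.1 * cos p.2.1) * q) * cos_sq_eq_one h₃

theorem stmt19_general (u ε q : ℝ) (X : ℝ × ℝ × ℝ → ℝ × ℝ × ℝ)
    (hX : X = fun θ : ℝ × ℝ × ℝ =>
      (u * sin θ.1 * cos θ.2.1 + ε * sin (2 * θ.1) * cos (2 * θ.2.1),
       u * sin θ.2.1 * cos θ.2.2 + ε * sin (2 * θ.2.1) * cos (2 * θ.2.2),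
       u * sin θ.2.2 * cos θ.1 + ε * sin (2 * θ.2.2) * cos (2 * θ.1) +
         q * (1 - cos (θ.1 - θ.2.1)) * sin (2 * θ.2.2)))
    {p : ℝ × ℝ × ℝ} (hp : sinVec p = 0) :
    X p = 0 ∧
    HasFDerivAt X (ContinuousLinearMap.mul ℝ (ℝ × ℝ × ℝ)
      (u * cos p.1 * cos p.2.1 + 2 * ε,
       u * cos p.2.1 * cos p.2.2 + 2 * ε,
       u * cos p.2.2 * cos p.1 + 2 * ε + 2 * (1 - cos p.1 * cos p.2.1) * q)) p := by
  have hX_factor : X = fun θ => sinCofactor u ε q θ • sinVec θ := by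
    simp only [hX, sinCofactor_smul_sinVec]
  refine ⟨by simp only [hX_factor, hp, smul_zero], ?_⟩
  rw [← sinCofactor_mul_cosVec_of_sinVec_eq_zero u ε q hp, hX_factor]
  refine (hasFDerivAt_smul_of_eq_zero (continuous_sinCofactor u ε q).continuousAt
    (hasFDerivAt_sinVec p) hp).congr_fderiv (ContinuousLinearMap.ext fun w => ?_)
  exact (mul_assoc _ _ _).symm

/-- for the vector field
`X(θ₁,θ₂,θ₃) = (u sinθ₁ cosθ₂ + ε sin2θ₁ cos2θ₂,
u sinθ₂ cosθ₃ + ε sin2θ₂ cos2θ₃,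
u sinθ₃ cosθ₁ + ε sin2θ₃ cos2θ₁ + q(1 − cos(θ₁−θ₂)) sin2θ₃)`,
the points `(0,0,0)`, `(π,0,0)`, `(0,π,0)` and `(0,0,π)` are equilibria, and
the Jacobian of `X` at these points is diagonal with diagonal entries
(eigenvalues) `(u+2ε, u+2ε, u+2ε)`, `(−u+2ε, u+2ε, −u+2ε+4q)`,
`(−u+2ε, −u+2ε, u+2ε+4q)` and `(u+2ε, −u+2ε, −u+2ε)` respectively. -/
theorem stmt19 (u ε q : ℝ) (X : ℝ × ℝ × ℝ → ℝ × ℝ × ℝ)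
    (hX : X = fun θ : ℝ × ℝ × ℝ =>
      (u * sin θ.1 * cos θ.2.1 + ε * sin (2 * θ.1) * cos (2 * θ.2.1),
       u * sin θ.2.1 * cos θ.2.2 + ε * sin (2 * θ.2.1) * cos (2 * θ.2.2),
       u * sin θ.2.2 * cos θ.1 + ε * sin (2 * θ.2.2) * cos (2 * θ.1) +
         q * (1 - cos (θ.1 - θ.2.1)) * sin (2 * θ.2.2))) :
    X ((0 : ℝ), (0 : ℝ), (0 : ℝ)) = 0 ∧
    X ((π : ℝ), (0 : ℝ), (0 : ℝ)) = 0 ∧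
    X ((0 : ℝ), (π : ℝ), (0 : ℝ)) = 0 ∧
    X ((0 : ℝ), (0 : ℝ), (π : ℝ)) = 0 ∧
    (∀ w : ℝ × ℝ × ℝ,
      fderiv ℝ X ((0 : ℝ), (0 : ℝ), (0 : ℝ)) w =
        ((u + 2 * ε) * w.1, (u + 2 * ε) * w.2.1, (u + 2 * ε) * w.2.2)) ∧
    (∀ w : ℝ × ℝ × ℝ,
      fderiv ℝ X ((π : ℝ), (0 : ℝ), (0 : ℝ)) w =
        ((-u + 2 * ε) * w.1, (u + 2 * ε) * w.2.1,
          (-u + 2 * ε + 4 * q) * w.2.2)) ∧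
    (∀ w : ℝ × ℝ × ℝ,
      fderiv ℝ X ((0 : ℝ), (π : ℝ), (0 : ℝ)) w =
        ((-u + 2 * ε) * w.1, (-u + 2 * ε) * w.2.1,
          (u + 2 * ε + 4 * q) * w.2.2)) ∧
    (∀ w : ℝ × ℝ × ℝ,
      fderiv ℝ X ((0 : ℝ), (0 : ℝ), (π : ℝ)) w =
        ((u + 2 * ε) * w.1, (-u + 2 * ε) * w.2.1, (-u + 2 * ε) * w.2.2)) := by
  have equilibrium {p} (hp : sinVec p = 0) := stmt19_general u ε q X hX hp
  norm_num [equilibrium, (equilibrium _).2.fderiv, sinVec, Prod.mul_def]
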